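/- For a finite-dimensional algebra Λ over a field F, a finitely generated projective left Λ-module P, and any finitely generated left Λ-module M, there is an isomorphism of F-vector spaces Hom_Λ(P, M) ≅ Hom_Λ(M, νP)*, natural in both P and M, where ν = ( (-)^∨ )* is the Nakayama functor (Serre duality). -/

import Mathlib

section
variable (F Λ : Type) [Field F] [Ring Λ] [Algebra F Λ]

/-- The right action of `Λ` on the dual `P^∨ = Hom_Λ(P,Λ)`: `(f·a)(p) = f(p)a`. -/
def rsmul {P : Type} [AddCommGroup P] [Module Λ P] (a : Λ) (f : P →ₗ[Λ] Λ) :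
    P →ₗ[Λ] Λ where
  toFun p := f p * a
  map_add' p q := by simp [add_mul]
  map_smul' c p := by simp [mul_assoc]

/-- The Nakayama functor on objects: `νP = (P^∨)* = Hom_F(Hom_Λ(P,Λ), F)`. -/
abbrev Nu (P : Type) [AddCommGroup P] [Module Λ P] : Type :=
  (P →ₗ[Λ] Λ) →ₗ[F] F

/-- The subspace of `Hom_F(M, νP)` consisting of the `Λ`-linear maps `M → νP`,
where `νP` carries the left `Λ`-action `(a·ξ)(f) = ξ(f·a)`.  This is the
hom-space `Hom_Λ(M, νP)`. -/
def homNu (M P : Type) [AddCommGroup M] [Module Λ M] [Module F M]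
    [SMulCommClass Λ F M] [AddCommGroup P] [Module Λ P] :
    Submodule F (M →ₗ[F] Nu F Λ P) where
  carrier := {h | ∀ (a : Λ) (m : M) (f : P →ₗ[Λ] Λ), h (a • m) f = h m (rsmul Λ a f)}
  add_mem' := by
    intro h g hh hg a m f
    simp [hh a m f, hg a m f]
  zero_mem' := by intro a m f; simp
  smul_mem' := by
    intro c h hh a m f
    simp [hh a m f]

/-- The dual `p^∨ : P^∨ → P'^∨` of `p : P' → P`, as an `F`-linear map. -/
def dualMapP {P P' : Type} [AddCommGroup P] [Module Λ P] [AddCommGroup P']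
    [Module Λ P'] (p : P' →ₗ[Λ] P) : (P →ₗ[Λ] Λ) →ₗ[F] (P' →ₗ[Λ] Λ) where
  toFun g := g.comp p
  map_add' g h := by ext q; rfl
  map_smul' c g := by ext q; rfl

/-- The Nakayama functor on morphisms: `νp : νP' → νP` for `p : P' → P`. -/
def nuMap {P P' : Type} [AddCommGroup P] [Module Λ P] [AddCommGroup P']
    [Module Λ P'] (p : P' →ₗ[Λ] P) : Nu F Λ P' →ₗ[F] Nu F Λ P where
  toFun ξ := ξ.comp (dualMapP F Λ p)
  map_add' ξ ζ := by ext g; rfl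
  map_smul' c ξ := by ext g; rfl

end

/-!
For arbitrary modules `P` and `M`, a functional `l` on `Hom_Λ(P, M)` gives the `Λ`-linear map
`M → νP`, `m ↦ (ψ ↦ l (ψ(-) m))`, and this is natural in `P` and `M`.  When `P` has a finite dual
basis `(bᵢ, φᵢ)`, the rank-one maps `ψ(-) m` span `Hom_Λ(P, M)`, and `h : M → νP` comes from exactly
one functional, the trace `f ↦ ∑ᵢ h (f bᵢ) φᵢ`.  So `Hom_Λ(P, M)* ≅ Hom_Λ(M, νP)` naturally, and
dualising once more gives the theorem, since `Hom_Λ(P, M)` is finite-dimensional.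
-/

section DualBasis

variable {R P M ι : Type*} [Semiring R] [AddCommMonoid P] [Module R P]
  [AddCommMonoid M] [Module R M] [Fintype ι]

/-- A finite dual basis of `P` in the sense of the dual basis lemma: elements `b i` of `P` and
functionals `φ i` on `P` whose rank-one maps sum to the identity. The `b i` need not be linearly
independent. -/
def IsDualBasis (b : ι → P) (φ : ι → P →ₗ[R] R) : Prop :=
  ∀ x, ∑ i, φ i x • b i = x

theorem exists_isDualBasis (R P : Type*) [Semiring R] [AddCommMonoid P] [Module R P]
    [Module.Finite R P] [Module.Projective R P] :
    ∃ (n : ℕ) (b : Fin n → P) (φ : Fin n → P →ₗ[R] R), IsDualBasis b φ := by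
  obtain ⟨n, π, s, -, -, hπs⟩ := Module.Finite.exists_comp_eq_id_of_projective R P
  refine ⟨n, fun i => π (Pi.single i 1), fun i => LinearMap.proj i ∘ₗ s, fun x => ?_⟩
  calc ∑ i, s x i • π (Pi.single i 1)
      = π (∑ i, s x i • Pi.single i 1) := by simp only [map_sum, map_smul]
    _ = π (s x) := by rw [← pi_eq_sum_univ']
    _ = x := LinearMap.congr_fun hπs x

theorem IsDualBasis.sum_smulRight {b : ι → P} {φ : ι → P →ₗ[R] R} (hb : IsDualBasis b φ)
    (f : P →ₗ[R] M) : ∑ i, (φ i).smulRight (f (b i)) = f := by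
  ext x
  calc (∑ i, (φ i).smulRight (f (b i))) x
      = f (∑ i, φ i x • b i) := by simp
    _ = f x := by rw [hb x]

end DualBasis

theorem finite_linearMap_of_isNoetherian (S R P M : Type*) [Ring S] [Semiring R] [AddCommMonoid P]
    [Module R P] [AddCommGroup M] [Module R M] [Module S M] [SMulCommClass R S M]
    [Module.Finite R P] [IsNoetherian S M] : Module.Finite S (P →ₗ[R] M) := by
  obtain ⟨n, b, hb⟩ := Module.Finite.exists_fin (R := R) (M := P)
  let evalAtGenerators : (P →ₗ[R] M) →ₗ[S] (Fin n → M) :=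
    LinearMap.pi fun i => LinearMap.applyₗ' S (b i)
  exact Module.Finite.of_injective evalAtGenerators fun f g hfg =>
    LinearMap.ext_on_range hb fun i => congrFun hfg i

/-- The rank-one maps `ψ(-) m : P → M`, as an `S`-bilinear function of `m : M` and `ψ : P → R`: the
analogue of `LinearMap.smulRightₗ` over a noncommutative `S`-algebra `R`. -/
def rankOne (S R P M : Type*) [CommSemiring S] [Semiring R] [Algebra S R] [AddCommMonoid P]
    [Module R P] [AddCommMonoid M] [Module R M] [Module S M] [IsScalarTower S R M]
    [SMulCommClass R S M] : M →ₗ[S] (P →ₗ[R] R) →ₗ[S] P →ₗ[R] M :=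
  LinearMap.mk₂ S (fun m ψ => ψ.smulRight m)
    (fun _ _ _ => by ext; simp)
    (fun c _ _ => by ext; simp [smul_comm _ c])
    (fun _ _ _ => by ext; simp [add_smul])
    (fun _ _ _ => by ext; simp)

section HomNu

variable {F Λ : Type} [Field F] [Ring Λ] [Algebra F Λ]
  {P P' M M' : Type} [AddCommGroup P] [Module Λ P] [AddCommGroup P'] [Module Λ P']
  [AddCommGroup M] [Module Λ M] [Module F M] [SMulCommClass Λ F M]
  [AddCommGroup M'] [Module Λ M'] [Module F M'] [SMulCommClass Λ F M']

theorem comp_restrictScalars_mem_homNu [IsScalarTower F Λ M] [IsScalarTower F Λ M']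
    {k : M' →ₗ[F] Nu F Λ P} (hk : k ∈ homNu F Λ M' P) (g : M →ₗ[Λ] M') :
    k ∘ₗ g.restrictScalars F ∈ homNu F Λ M P := fun a m ψ => by
  simpa using hk a (g m) ψ

theorem nuMap_comp_mem_homNu {k : M →ₗ[F] Nu F Λ P'} (hk : k ∈ homNu F Λ M P')
    (p : P' →ₗ[Λ] P) : nuMap F Λ p ∘ₗ k ∈ homNu F Λ M P := fun a m ψ =>
  hk a m (ψ ∘ₗ p)

theorem IsDualBasis.sum_homNu_apply {ι : Type*} [Fintype ι] {b : ι → P} {φ : ι → P →ₗ[Λ] Λ}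
    (hb : IsDualBasis b φ) (h : homNu F Λ M P) (m : M) (ψ : P →ₗ[Λ] Λ) :
    ∑ i, h.1 (ψ (b i) • m) (φ i) = h.1 m ψ :=
  calc ∑ i, h.1 (ψ (b i) • m) (φ i)
      = ∑ i, h.1 m ((φ i).smulRight (ψ (b i))) :=
        Finset.sum_congr rfl fun i _ => h.2 (ψ (b i)) m (φ i)
    _ = h.1 m ψ := by rw [← map_sum, hb.sum_smulRight]

variable [IsScalarTower F Λ M] [IsScalarTower F Λ M']

/-- The natural map `Hom_Λ(P, M)* → Hom_Λ(M, νP)` sending a functional `l` to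
`m ↦ (ψ ↦ l (ψ(-) m))`. -/
def dualHomToHomNu : Module.Dual F (P →ₗ[Λ] M) →ₗ[F] homNu F Λ M P where
  toFun l := ⟨(rankOne F Λ P M).compr₂ l, fun a m ψ =>
    congrArg l <| LinearMap.ext fun x => smul_smul (ψ x) a m⟩
  map_add' _ _ := rfl
  map_smul' _ _ := rfl

theorem dualHomToHomNu_apply (l : Module.Dual F (P →ₗ[Λ] M)) (m : M) (ψ : P →ₗ[Λ] Λ) :
    (dualHomToHomNu l).1 m ψ = l (ψ.smulRight m) := rfl

theorem dualHomToHomNu_comp_compRight (g : M →ₗ[Λ] M') (l : Module.Dual F (P →ₗ[Λ] M')) :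
    dualHomToHomNu (l ∘ₗ g.compRight F) =
      ⟨(dualHomToHomNu l).1 ∘ₗ g.restrictScalars F,
        comp_restrictScalars_mem_homNu (dualHomToHomNu l).2 g⟩ := by
  ext m ψ
  exact congrArg l <| LinearMap.ext fun x => map_smul g (ψ x) m

theorem dualHomToHomNu_comp_lcomp (p : P' →ₗ[Λ] P) (l : Module.Dual F (P' →ₗ[Λ] M)) :
    dualHomToHomNu (l ∘ₗ LinearMap.lcomp F M p) =
      ⟨nuMap F Λ p ∘ₗ (dualHomToHomNu l).1, nuMap_comp_mem_homNu (dualHomToHomNu l).2 p⟩ := rfl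

theorem IsDualBasis.bijective_dualHomToHomNu {ι : Type*} [Fintype ι] {b : ι → P}
    {φ : ι → P →ₗ[Λ] Λ} (hb : IsDualBasis b φ) :
    Function.Bijective (dualHomToHomNu : Module.Dual F (P →ₗ[Λ] M) → homNu F Λ M P) := by
  constructor
  · intro l l' hll'
    ext f
    have agree (m : M) (ψ : P →ₗ[Λ] Λ) : l (ψ.smulRight m) = l' (ψ.smulRight m) := by
      rw [← dualHomToHomNu_apply, hll', dualHomToHomNu_apply]
    rw [← hb.sum_smulRight f, map_sum, map_sum]
    exact Finset.sum_congr rfl fun i _ => agree (f (b i)) (φ i)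
  · intro h
    let trace : Module.Dual F (P →ₗ[Λ] M) :=
      ∑ i, h.1.flip (φ i) ∘ₗ LinearMap.applyₗ' F (b i)
    have trace_apply (f : P →ₗ[Λ] M) : trace f = ∑ i, h.1 (f (b i)) (φ i) := by
      simp [trace]
    refine ⟨trace, ?_⟩
    ext m ψ
    rw [dualHomToHomNu_apply, trace_apply]
    exact hb.sum_homNu_apply h m ψ

theorem bijective_dualHomToHomNu [Module.Finite Λ P] [Module.Projective Λ P] :
    Function.Bijective (dualHomToHomNu : Module.Dual F (P →ₗ[Λ] M) → homNu F Λ M P) :=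
  let ⟨_, _, _, hb⟩ := exists_isDualBasis Λ P
  hb.bijective_dualHomToHomNu

section SerreDuality

variable [Module.Finite Λ P] [Module.Projective Λ P] [Module.Finite F (P →ₗ[Λ] M)]

/-- The Serre duality isomorphism `Hom_Λ(P, M) ≅ Hom_Λ(M, νP)*`: the biduality isomorphism of
`Hom_Λ(P, M)` followed by the dual of the inverse of `dualHomToHomNu`. -/
noncomputable def serreDuality : (P →ₗ[Λ] M) ≃ₗ[F] Module.Dual F (homNu F Λ M P) :=
  Module.evalEquiv F (P →ₗ[Λ] M) ≪≫ₗ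
    (LinearEquiv.ofBijective dualHomToHomNu bijective_dualHomToHomNu).symm.dualMap

theorem serreDuality_apply_dualHomToHomNu (f : P →ₗ[Λ] M) (l : Module.Dual F (P →ₗ[Λ] M)) :
    serreDuality f (dualHomToHomNu l) = l f :=
  congrArg (fun l' : Module.Dual F (P →ₗ[Λ] M) => l' f)
    (LinearEquiv.ofBijective_symm_apply_apply dualHomToHomNu (h := bijective_dualHomToHomNu) l)

theorem serreDuality_comp_left_apply [Module.Finite F (P →ₗ[Λ] M')] (g : M →ₗ[Λ] M')
    (f : P →ₗ[Λ] M) (k : homNu F Λ M' P) :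
    serreDuality (g ∘ₗ f) k =
      serreDuality f ⟨k.1 ∘ₗ g.restrictScalars F, comp_restrictScalars_mem_homNu k.2 g⟩ := by
  obtain ⟨l, rfl⟩ := bijective_dualHomToHomNu.surjective k
  rw [← dualHomToHomNu_comp_compRight, serreDuality_apply_dualHomToHomNu,
    serreDuality_apply_dualHomToHomNu]
  rfl

theorem serreDuality_comp_right_apply [Module.Finite Λ P'] [Module.Projective Λ P']
    [Module.Finite F (P' →ₗ[Λ] M)] (p : P' →ₗ[Λ] P) (f : P →ₗ[Λ] M) (k : homNu F Λ M P') :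
    serreDuality (f ∘ₗ p) k =
      serreDuality f ⟨nuMap F Λ p ∘ₗ k.1, nuMap_comp_mem_homNu k.2 p⟩ := by
  obtain ⟨l, rfl⟩ := bijective_dualHomToHomNu.surjective k
  rw [← dualHomToHomNu_comp_lcomp, serreDuality_apply_dualHomToHomNu,
    serreDuality_apply_dualHomToHomNu]
  rfl

end SerreDuality

end HomNu

theorem stmt_4_general (F Λ : Type) [Field F] [Ring Λ] [Algebra F Λ] :
    ∃ e : ∀ (P M : Type) [AddCommGroup P] [Module Λ P] [AddCommGroup M] [Module Λ M]
        [Module F M] [IsScalarTower F Λ M] [SMulCommClass Λ F M],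
        Module.Finite Λ P → Module.Projective Λ P → Module.Finite F (P →ₗ[Λ] M) →
        ((P →ₗ[Λ] M) ≃ₗ[F] (↥(homNu F Λ M P) →ₗ[F] F)),
      (∀ (P M M' : Type) [AddCommGroup P] [Module Λ P]
          [AddCommGroup M] [Module Λ M] [Module F M] [IsScalarTower F Λ M]
          [SMulCommClass Λ F M]
          [AddCommGroup M'] [Module Λ M'] [Module F M'] [IsScalarTower F Λ M']
          [SMulCommClass Λ F M']
          (hP1 : Module.Finite Λ P) (hP2 : Module.Projective Λ P)
          (hPM : Module.Finite F (P →ₗ[Λ] M)) (hPM' : Module.Finite F (P →ₗ[Λ] M'))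
          (g : M →ₗ[Λ] M') (f : P →ₗ[Λ] M)
          (k : M' →ₗ[F] Nu F Λ P) (hk : k ∈ homNu F Λ M' P)
          (hk2 : k.comp (g.restrictScalars F) ∈ homNu F Λ M P),
        e P M' hP1 hP2 hPM' (g ∘ₗ f) ⟨k, hk⟩ =
          e P M hP1 hP2 hPM f ⟨k.comp (g.restrictScalars F), hk2⟩) ∧
      (∀ (P P' M : Type) [AddCommGroup P] [Module Λ P] [AddCommGroup P'] [Module Λ P']
          [AddCommGroup M] [Module Λ M] [Module F M] [IsScalarTower F Λ M]
          [SMulCommClass Λ F M]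
          (hP1 : Module.Finite Λ P) (hP2 : Module.Projective Λ P)
          (hP1' : Module.Finite Λ P') (hP2' : Module.Projective Λ P')
          (hPM : Module.Finite F (P →ₗ[Λ] M)) (hP'M : Module.Finite F (P' →ₗ[Λ] M))
          (p : P' →ₗ[Λ] P) (f : P →ₗ[Λ] M)
          (k : M →ₗ[F] Nu F Λ P') (hk : k ∈ homNu F Λ M P')
          (hk2 : (nuMap F Λ p).comp k ∈ homNu F Λ M P),
        e P M hP1 hP2 hPM f ⟨(nuMap F Λ p).comp k, hk2⟩ =
          e P' M hP1' hP2' hP'M (f ∘ₗ p) ⟨k, hk⟩) := by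
  refine ⟨fun _ _ _ _ _ _ _ _ _ _ _ _ => serreDuality, ?_, ?_⟩
  · intro P M M' _ _ _ _ _ _ _ _ _ _ _ _ _ _ _ _ g f k hk _
    exact serreDuality_comp_left_apply g f ⟨k, hk⟩
  · intro P P' M _ _ _ _ _ _ _ _ _ _ _ _ _ _ _ p f k hk _
    exact (serreDuality_comp_right_apply p f ⟨k, hk⟩).symm

/-- Serre duality: For a finite-dimensional `F`-algebra `Λ`,
a finitely generated projective left `Λ`-module `P` and a finitely generated
left `Λ`-module `M`, there is an `F`-linear isomorphism
`Hom_Λ(P,M) ≅ Hom_Λ(M, νP)*`, natural in both `P` and `M`, where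
`ν = Hom_F(Hom_Λ(-,Λ), F)` is the Nakayama functor. -/
theorem stmt_4 (F Λ : Type) [Field F] [Ring Λ] [Algebra F Λ] [FiniteDimensional F Λ] :
    ∃ e : ∀ (P M : Type) [AddCommGroup P] [Module Λ P] [AddCommGroup M] [Module Λ M]
        [Module F M] [IsScalarTower F Λ M] [SMulCommClass Λ F M],
        Module.Finite Λ P → Module.Projective Λ P → Module.Finite Λ M →
        ((P →ₗ[Λ] M) ≃ₗ[F] (↥(homNu F Λ M P) →ₗ[F] F)),
      -- naturality in M
      (∀ (P M M' : Type) [AddCommGroup P] [Module Λ P]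
          [AddCommGroup M] [Module Λ M] [Module F M] [IsScalarTower F Λ M]
          [SMulCommClass Λ F M]
          [AddCommGroup M'] [Module Λ M'] [Module F M'] [IsScalarTower F Λ M']
          [SMulCommClass Λ F M']
          (hP1 : Module.Finite Λ P) (hP2 : Module.Projective Λ P)
          (hM : Module.Finite Λ M) (hM' : Module.Finite Λ M')
          (g : M →ₗ[Λ] M') (f : P →ₗ[Λ] M)
          (k : M' →ₗ[F] Nu F Λ P) (hk : k ∈ homNu F Λ M' P)
          (hk2 : k.comp (g.restrictScalars F) ∈ homNu F Λ M P),
        e P M' hP1 hP2 hM' (g ∘ₗ f) ⟨k, hk⟩ =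
          e P M hP1 hP2 hM f ⟨k.comp (g.restrictScalars F), hk2⟩) ∧
      -- naturality in P
      (∀ (P P' M : Type) [AddCommGroup P] [Module Λ P] [AddCommGroup P'] [Module Λ P']
          [AddCommGroup M] [Module Λ M] [Module F M] [IsScalarTower F Λ M]
          [SMulCommClass Λ F M]
          (hP1 : Module.Finite Λ P) (hP2 : Module.Projective Λ P)
          (hP1' : Module.Finite Λ P') (hP2' : Module.Projective Λ P')
          (hM : Module.Finite Λ M)
          (p : P' →ₗ[Λ] P) (f : P →ₗ[Λ] M)
          (k : M →ₗ[F] Nu F Λ P') (hk : k ∈ homNu F Λ M P')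
          (hk2 : (nuMap F Λ p).comp k ∈ homNu F Λ M P),
        e P M hP1 hP2 hM f ⟨(nuMap F Λ p).comp k, hk2⟩ =
          e P' M hP1' hP2' hM (f ∘ₗ p) ⟨k, hk⟩) := by
  obtain ⟨e, natural_M, natural_P⟩ := stmt_4_general F Λ
  refine ⟨fun P M _ _ _ _ _ _ _ hP1 hP2 hM =>
    have : Module.Finite F M := .trans Λ M
    e P M hP1 hP2 (finite_linearMap_of_isNoetherian F Λ P M), ?_, ?_⟩
  · intros
    apply natural_M
  · intros
    apply natural_P
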